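/- arXiv:2509.10263 — 2 statements merged into one kernel-verified Lean document; each statement's English description precedes it below -/
import Mathlib

section
/- Let F be a logarithmically homogeneous barrier with negative curvature for a regular cone K ⊂ ℝⁿ. Then for all x, y ∈ int K, ‖y−x‖ₓ²/(1+σₓ(y−x)) ≤ ⟨F'(y) − F'(x), y − x⟩ ≤ ‖y−x‖ₓ²/(1−σₓ(x−y)). -/
open scoped RealInnerProductSpace
open Set

noncomputable section

variable {E : Type*} [NormedAddCommGroup E] [InnerProductSpace ℝ E] [CompleteSpace E]

/-- The dual cone `K* = {s : ⟨s,x⟩ ≥ 0 for all x ∈ K}`. -/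
def dualCone (K : Set E) : Set E := {s | ∀ x ∈ K, 0 ≤ ⟪s, x⟫}

/-- `K` is a regular cone: closed, convex, a cone, pointed, with nonempty interior. -/
def IsRegularCone (K : Set E) : Prop :=
  IsClosed K ∧ Convex ℝ K ∧ (∀ x ∈ K, ∀ t : ℝ, 0 ≤ t → t • x ∈ K) ∧
    (∀ x, x ∈ K → -x ∈ K → x = 0) ∧ (interior K).Nonempty

/-- The Minkowski gauge `σ_x(h) = inf {β ≥ 0 : β • x - h ∈ K}`. -/
def mink (K : Set E) (x h : E) : ℝ := sInf {β : ℝ | 0 ≤ β ∧ β • x - h ∈ K}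

/-- The Hessian `F''(x)` of `F` at `x`, as a continuous linear map. -/
def Hess (F : E → ℝ) (x : E) : E →L[ℝ] E := fderiv ℝ (fun y => gradient F y) x

/-- The directional third derivative `F'''(x;h)`: the directional derivative of the Hessian
of `F` at `x` in the direction `h`, as a continuous linear map. -/
def D3 (F : E → ℝ) (x h : E) : E →L[ℝ] E := fderiv ℝ (fun y => Hess F y) x h

/-- The local norm `‖h‖ₓ = ⟨F''(x) h, h⟩^{1/2}`. -/
def localNorm (F : E → ℝ) (x h : E) : ℝ := Real.sqrt ⟪Hess F x h, h⟫

/-- `F` is a ϑ-logarithmically homogeneous barrier for `K`: a three times continuously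
differentiable convex function on `int K`, with positive definite Hessians, satisfying
`F (t • x) = F x - ϑ ln t`. -/
structure IsLHB (K : Set E) (ϑ : ℝ) (F : E → ℝ) : Prop where
  contDiff : ContDiffOn ℝ 3 F (interior K)
  convexOn : ConvexOn ℝ (interior K) F
  hess_posdef : ∀ x ∈ interior K, ∀ v : E, v ≠ 0 → 0 < ⟪Hess F x v, v⟫
  log_hom : ∀ x ∈ interior K, ∀ t : ℝ, 0 < t → F (t • x) = F x - ϑ * Real.log t

/-- `F` has negative curvature: `x ↦ ⟨F'(x), u⟩` is concave on `int K` for every `u ∈ K`. -/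
def NegCurv (K : Set E) (F : E → ℝ) : Prop :=
  ∀ u ∈ K, ConcaveOn ℝ (interior K) (fun x => ⟪gradient F x, u⟫)

open scoped Topology

/-!
Write `h = y - x`. Testing the supergradient inequality for the concave map `⟪F'(·), u⟫` at `x`
against `u = a x + c h ∈ K`, and evaluating the `x`-component of both sides by the two Euler
identities `⟪F'(z), z⟫ = -ϑ` and `⟪F''(x) h, x⟫ = -⟪F'(x), h⟫`, gives
`(c - a) ⟪F'(y) - F'(x), h⟫ ≤ c ⟪F''(x) h, h⟫`.
Since the gauge is attained, `(a, c) = (σₓ(h), -1)` and `(a, c) = (σₓ(-h), 1)` are admissible, and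
these are the two bounds. They give `0 ≤ (σₓ(h) + σₓ(-h)) ⟪F'(y) - F'(x), h⟫`, where the first
factor is positive unless `h = 0` because `K` is pointed; hence `⟪F''(x) h, h⟫ ≥ 0`, and the square
root in `‖h‖ₓ` is never truncated.
-/

theorem eventually_sub_smul_mem_of_mem_interior {V : Type*} [AddCommGroup V] [Module ℝ V]
    [TopologicalSpace V] [ContinuousSub V] [ContinuousSMul ℝ V] {K : Set V} {x : V}
    (hx : x ∈ interior K) (h : V) : ∀ᶠ ε : ℝ in 𝓝[>] 0, x - ε • h ∈ K := by
  have hcont : Continuous fun ε : ℝ => x - ε • h := by fun_prop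
  have hmem : K ∈ 𝓝 (x - (0 : ℝ) • h) := by simpa using mem_interior_iff_mem_nhds.1 hx
  exact nhdsWithin_le_nhds (hcont.continuousAt.eventually_mem hmem)

section Gauge

variable {V : Type*} [NormedAddCommGroup V] [InnerProductSpace ℝ V] {K : Set V} {x y : V}

theorem mink_nonneg (K : Set V) (x h : V) : 0 ≤ mink K x h :=
  Real.sInf_nonneg fun _ hβ => hβ.1

theorem mink_le {h : V} {β : ℝ} (hβ : 0 ≤ β) (hmem : β • x - h ∈ K) : mink K x h ≤ β :=
  csInf_le ⟨0, fun _ hγ => hγ.1⟩ ⟨hβ, hmem⟩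

theorem mink_smul_sub_mem (hclosed : IsClosed K) (hcone : ∀ z ∈ K, ∀ t : ℝ, 0 ≤ t → t • z ∈ K)
    (hx : x ∈ interior K) (h : V) : mink K x h • x - h ∈ K := by
  have hfeasible : {β : ℝ | 0 ≤ β ∧ β • x - h ∈ K}.Nonempty := by
    obtain ⟨ε, hmem, hε⟩ :=
      ((eventually_sub_smul_mem_of_mem_interior hx h).and self_mem_nhdsWithin).exists
    have hε : 0 < ε := hε
    refine ⟨ε⁻¹, by positivity, ?_⟩
    simpa only [smul_sub, inv_smul_smul₀ hε.ne'] using hcone _ hmem ε⁻¹ (by positivity)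
  have hfeasible_closed : IsClosed {β : ℝ | 0 ≤ β ∧ β • x - h ∈ K} :=
    isClosed_Ici.inter (hclosed.preimage (by fun_prop))
  exact (hfeasible_closed.csInf_mem hfeasible ⟨0, fun _ hβ => hβ.1⟩).2

theorem mink_add_mink_neg_pos (hclosed : IsClosed K)
    (hcone : ∀ z ∈ K, ∀ t : ℝ, 0 ≤ t → t • z ∈ K) (hpointed : ∀ z, z ∈ K → -z ∈ K → z = 0)
    (hx : x ∈ interior K) {h : V} (hh : h ≠ 0) : 0 < mink K x h + mink K x (-h) := by
  have hnonneg := mink_nonneg K x h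
  have hnonneg_neg := mink_nonneg K x (-h)
  by_contra! hsum
  have hzero : mink K x h = 0 := by linarith
  have hzero_neg : mink K x (-h) = 0 := by linarith
  have hneg_mem : -h ∈ K := by simpa [hzero] using mink_smul_sub_mem hclosed hcone hx h
  have hmem : h ∈ K := by simpa [hzero_neg] using mink_smul_sub_mem hclosed hcone hx (-h)
  exact hh (hpointed h hmem hneg_mem)

theorem mink_sub_lt_one (x : V) (hy : y ∈ interior K) : mink K x (x - y) < 1 := by
  obtain ⟨ε, hmem, hε_pos, hε_lt⟩ :=
    ((eventually_sub_smul_mem_of_mem_interior hy x).and (Ioo_mem_nhdsGT one_pos)).exists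
  have hshift : (1 - ε) • x - (x - y) = y - ε • x := by module
  calc mink K x (x - y) ≤ 1 - ε := mink_le (by linarith) (hshift ▸ hmem)
    _ < 1 := by linarith

end Gauge

theorem le_add_fderiv_of_concaveOn {V : Type*} [NormedAddCommGroup V] [NormedSpace ℝ V]
    {s : Set V} {f : V → ℝ} {f' : V →L[ℝ] ℝ} {x y : V} (hf : ConcaveOn ℝ s f)
    (hf' : HasFDerivAt f f' x) (hx : x ∈ s) (hy : y ∈ s) : f y ≤ f x + f' (y - x) := by
  have hderiv : HasDerivAt (f ∘ AffineMap.lineMap (k := ℝ) x y) (f' (y - x)) 0 :=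
    hf'.comp_hasDerivAt_of_eq 0 AffineMap.hasDerivAt_lineMap (by simp)
  have hslope := (hf.comp_affineMap (AffineMap.lineMap x y)).slope_le_of_hasDerivAt
    (x := 0) (y := 1) (by simpa using hx) (by simpa using hy) one_pos hderiv
  simp only [slope_def_field, Function.comp_apply, AffineMap.lineMap_apply_one,
    AffineMap.lineMap_apply_zero, sub_zero, div_one] at hslope
  linarith

section Euler

variable {F : E → ℝ} {x : E} {ϑ : ℝ}

theorem hasFDerivAt_gradient (hF : ContDiffAt ℝ 2 F x) :
    HasFDerivAt (gradient F) (Hess F x) x := by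
  have hfderiv : DifferentiableAt ℝ (fderiv ℝ F) x :=
    (hF.fderiv_right (m := 1) (by norm_num)).differentiableAt one_ne_zero
  exact ((InnerProductSpace.toDual ℝ E).symm.differentiableAt.comp x hfderiv).hasFDerivAt

/-- Logarithmic homogeneity of degree `ϑ` on `s`, the `log_hom` field of `IsLHB`. -/
def LogHomogeneousOn (s : Set E) (ϑ : ℝ) (F : E → ℝ) : Prop :=
  ∀ x ∈ s, ∀ t : ℝ, 0 < t → F (t • x) = F x - ϑ * Real.log t

namespace LogHomogeneousOn

variable {s : Set E}

theorem inner_gradient_self (hlog : LogHomogeneousOn s ϑ F) (hx : x ∈ s)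
    (hF : DifferentiableAt ℝ F x) : ⟪gradient F x, x⟫ = -ϑ := by
  have hray : HasDerivAt (fun t : ℝ => t • x) x 1 := by
    simpa using (hasDerivAt_id (1 : ℝ)).smul_const x
  have hchain : HasDerivAt (fun t : ℝ => F (t • x)) ⟪gradient F x, x⟫ 1 :=
    hF.hasGradientAt.hasFDerivAt.comp_hasDerivAt_of_eq 1 hray (by simp)
  have hlog_deriv : HasDerivAt (fun t : ℝ => F x - ϑ * Real.log t) (-ϑ) 1 := by
    simpa using ((Real.hasDerivAt_log one_ne_zero).const_mul ϑ).const_sub (F x)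
  have heq : (fun t : ℝ => F (t • x)) =ᶠ[𝓝 1] fun t => F x - ϑ * Real.log t :=
    (lt_mem_nhds one_pos).mono fun t ht => hlog x hx t ht
  exact hchain.unique (hlog_deriv.congr_of_eventuallyEq heq)

theorem inner_hess_self (hlog : LogHomogeneousOn s ϑ F) (hs : IsOpen s)
    (hF : ContDiffOn ℝ 2 F s) (hx : x ∈ s) (h : E) :
    ⟪Hess F x h, x⟫ = -⟪gradient F x, h⟫ := by
  have hconst : (fun z => ⟪gradient F z, z⟫) =ᶠ[𝓝 x] fun _ => -ϑ := by
    filter_upwards [hs.mem_nhds hx] with z hz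
    exact hlog.inner_gradient_self hz
      ((hF.contDiffAt (hs.mem_nhds hz)).differentiableAt two_ne_zero)
  have hproduct := (hasFDerivAt_gradient (hF.contDiffAt (hs.mem_nhds hx))).inner ℝ
    (hasFDerivAt_id x)
  have hzero := DFunLike.congr_fun
    (hproduct.unique ((hasFDerivAt_const (-ϑ) x).congr_of_eventuallyEq hconst)) h
  have hsum : ⟪gradient F x, h⟫ + ⟪Hess F x h, x⟫ = 0 := by simpa using hzero
  linarith

end LogHomogeneousOn

end Euler

namespace NegCurv

variable {K : Set E} {F : E → ℝ} {ϑ : ℝ} {x y : E}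

theorem inner_gradient_sub_le (hNC : NegCurv K F) (hF : ContDiffAt ℝ 2 F x)
    (hx : x ∈ interior K) (hy : y ∈ interior K) {u : E} (hu : u ∈ K) :
    ⟪gradient F y - gradient F x, u⟫ ≤ ⟪Hess F x (y - x), u⟫ := by
  have hderiv := (hasFDerivAt_gradient hF).inner ℝ (hasFDerivAt_const u x)
  have htangent : ⟪gradient F y, u⟫ ≤ ⟪gradient F x, u⟫ + ⟪Hess F x (y - x), u⟫ := by
    simpa using le_add_fderiv_of_concaveOn (hNC u hu) hderiv hx hy
  rw [inner_sub_left]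
  linarith

theorem sub_mul_inner_gradient_sub_le (hNC : NegCurv K F) (hF : ContDiffOn ℝ 2 F (interior K))
    (hlog : LogHomogeneousOn (interior K) ϑ F) (hx : x ∈ interior K) (hy : y ∈ interior K)
    {a c : ℝ} (hu : a • x + c • (y - x) ∈ K) :
    (c - a) * ⟪gradient F y - gradient F x, y - x⟫ ≤ c * ⟪Hess F x (y - x), y - x⟫ := by
  have hF_at : ∀ z ∈ interior K, ContDiffAt ℝ 2 F z := fun z hz =>
    hF.contDiffAt (isOpen_interior.mem_nhds hz)
  have heuler : ∀ z ∈ interior K, ⟪gradient F z, z⟫ = -ϑ := fun z hz =>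
    hlog.inner_gradient_self hz ((hF_at z hz).differentiableAt two_ne_zero)
  have hgradient : ⟪gradient F y - gradient F x, x⟫ = -⟪gradient F y, y - x⟫ := by
    rw [inner_sub_left, inner_sub_right, heuler x hx, heuler y hy]
    ring
  have hhess : ⟪Hess F x (y - x), x⟫ = -⟪gradient F x, y - x⟫ :=
    hlog.inner_hess_self isOpen_interior hF hx (y - x)
  have htest := hNC.inner_gradient_sub_le (hF_at x hx) hx hy hu
  rw [inner_add_right, inner_add_right] at htest
  simp only [inner_smul_right, hgradient, hhess] at htest
  linear_combination htest - a * inner_sub_left (𝕜 := ℝ) (gradient F y) (gradient F x) (y - x)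

theorem inner_hess_le_one_add_mink_mul (hK : IsRegularCone K) (hNC : NegCurv K F)
    (hF : ContDiffOn ℝ 2 F (interior K)) (hlog : LogHomogeneousOn (interior K) ϑ F)
    (hx : x ∈ interior K) (hy : y ∈ interior K) :
    ⟪Hess F x (y - x), y - x⟫ ≤
      (1 + mink K x (y - x)) * ⟪gradient F y - gradient F x, y - x⟫ := by
  obtain ⟨hclosed, -, hcone, -⟩ := hK
  have hu : mink K x (y - x) • x + (-1 : ℝ) • (y - x) ∈ K := by
    simpa only [neg_one_smul, ← sub_eq_add_neg] using mink_smul_sub_mem hclosed hcone hx (y - x)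
  linarith [hNC.sub_mul_inner_gradient_sub_le hF hlog hx hy hu]

theorem one_sub_mink_mul_le_inner_hess (hK : IsRegularCone K) (hNC : NegCurv K F)
    (hF : ContDiffOn ℝ 2 F (interior K)) (hlog : LogHomogeneousOn (interior K) ϑ F)
    (hx : x ∈ interior K) (hy : y ∈ interior K) :
    (1 - mink K x (x - y)) * ⟪gradient F y - gradient F x, y - x⟫ ≤
      ⟪Hess F x (y - x), y - x⟫ := by
  obtain ⟨hclosed, -, hcone, -⟩ := hK
  have hu : mink K x (x - y) • x + (1 : ℝ) • (y - x) ∈ K := by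
    simpa only [one_smul, ← neg_sub x y, ← sub_eq_add_neg] using
      mink_smul_sub_mem hclosed hcone hx (x - y)
  linarith [hNC.sub_mul_inner_gradient_sub_le hF hlog hx hy hu]

theorem inner_gradient_sub_nonneg (hK : IsRegularCone K) (hNC : NegCurv K F)
    (hF : ContDiffOn ℝ 2 F (interior K)) (hlog : LogHomogeneousOn (interior K) ϑ F)
    (hx : x ∈ interior K) (hy : y ∈ interior K) :
    0 ≤ ⟪gradient F y - gradient F x, y - x⟫ := by
  rcases eq_or_ne y x with rfl | hyx
  · simp
  have hupper := hNC.inner_hess_le_one_add_mink_mul hK hF hlog hx hy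
  have hlower := hNC.one_sub_mink_mul_le_inner_hess hK hF hlog hx hy
  obtain ⟨hclosed, -, hcone, hpointed, -⟩ := hK
  have hpos : 0 < mink K x (y - x) + mink K x (x - y) := by
    simpa only [neg_sub] using
      mink_add_mink_neg_pos hclosed hcone hpointed hx (sub_ne_zero.2 hyx)
  exact nonneg_of_mul_nonneg_right (by linarith) hpos

theorem localNorm_sub_sq (hK : IsRegularCone K) (hNC : NegCurv K F)
    (hF : ContDiffOn ℝ 2 F (interior K)) (hlog : LogHomogeneousOn (interior K) ϑ F)
    (hx : x ∈ interior K) (hy : y ∈ interior K) :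
    localNorm F x (y - x) ^ 2 = ⟪Hess F x (y - x), y - x⟫ := by
  refine Real.sq_sqrt (le_trans ?_ (hNC.one_sub_mink_mul_le_inner_hess hK hF hlog hx hy))
  exact mul_nonneg (sub_nonneg.2 (mink_sub_lt_one x hy).le)
    (hNC.inner_gradient_sub_nonneg hK hF hlog hx hy)

end NegCurv

theorem stmt3_general {K : Set E} {ϑ : ℝ} {F : E → ℝ} (hK : IsRegularCone K)
    (hF : ContDiffOn ℝ 2 F (interior K)) (hlog : LogHomogeneousOn (interior K) ϑ F)
    (hNC : NegCurv K F) {x y : E} (hx : x ∈ interior K) (hy : y ∈ interior K) :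
    localNorm F x (y - x) ^ 2 / (1 + mink K x (y - x)) ≤
        ⟪gradient F y - gradient F x, y - x⟫ ∧
    ⟪gradient F y - gradient F x, y - x⟫ ≤
        localNorm F x (y - x) ^ 2 / (1 - mink K x (x - y)) := by
  have hden_lower : 0 < 1 + mink K x (y - x) := by linarith [mink_nonneg K x (y - x)]
  have hden_upper : 0 < 1 - mink K x (x - y) := sub_pos.2 (mink_sub_lt_one x hy)
  rw [hNC.localNorm_sub_sq hK hF hlog hx hy, div_le_iff₀' hden_lower, le_div_iff₀' hden_upper]
  exact ⟨hNC.inner_hess_le_one_add_mink_mul hK hF hlog hx hy,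
    hNC.one_sub_mink_mul_le_inner_hess hK hF hlog hx hy⟩

/-- For a logarithmically homogeneous barrier `F` with negative curvature on a
regular cone `K`, for all `x, y ∈ int K`,
`‖y−x‖ₓ²/(1+σₓ(y−x)) ≤ ⟨F'(y) − F'(x), y − x⟩ ≤ ‖y−x‖ₓ²/(1−σₓ(x−y))`. -/
theorem stmt3 {n : ℕ} (K : Set (EuclideanSpace ℝ (Fin n))) (ϑ : ℝ)
    (F : EuclideanSpace ℝ (Fin n) → ℝ)
    (hK : IsRegularCone K) (hF : IsLHB K ϑ F) (hNC : NegCurv K F)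
    (x : EuclideanSpace ℝ (Fin n)) (hx : x ∈ interior K)
    (y : EuclideanSpace ℝ (Fin n)) (hy : y ∈ interior K) :
    localNorm F x (y - x) ^ 2 / (1 + mink K x (y - x)) ≤
        ⟪gradient F y - gradient F x, y - x⟫ ∧
    ⟪gradient F y - gradient F x, y - x⟫ ≤
        localNorm F x (y - x) ^ 2 / (1 - mink K x (x - y)) :=
  stmt3_general hK (hF.contDiff.of_le (by norm_num)) hF.log_hom hNC hx hy
end
end

section
/- Let F be a ϑ-LHSCB for a regular cone K ⊂ ℝⁿ. Then for every x ∈ int K and every u ∈ K, ⟨−F'(x), u⟩ ≤ √ϑ·‖u‖ₓ ≤ √ϑ·⟨−F'(x), u⟩. -/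
open scoped RealInnerProductSpace
open Set

noncomputable section

variable {E : Type*} [NormedAddCommGroup E] [InnerProductSpace ℝ E] [CompleteSpace E]

/-- `F` is a ϑ-logarithmically homogeneous self-concordant barrier (ϑ-LHSCB) for `K`:
a three times continuously differentiable convex function on `int K`, with positive definite
Hessians, satisfying `F (t • x) = F x - ϑ ln t` and the self-concordance condition
`F'''(x;h) ⪯ 2 ‖h‖ₓ F''(x)` (as quadratic forms). -/
structure IsLHSCB (K : Set E) (ϑ : ℝ) (F : E → ℝ) : Prop where
  contDiff : ContDiffOn ℝ 3 F (interior K)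
  convexOn : ConvexOn ℝ (interior K) F
  hess_posdef : ∀ x ∈ interior K, ∀ v : E, v ≠ 0 → 0 < ⟪Hess F x v, v⟫
  log_hom : ∀ x ∈ interior K, ∀ t : ℝ, 0 < t → F (t • x) = F x - ϑ * Real.log t
  self_conc : ∀ x ∈ interior K, ∀ h v : E,
    ⟪D3 F x h v, v⟫ ≤ 2 * localNorm F x h * ⟪Hess F x v, v⟫

/-! Logarithmic homogeneity gives `F''(x) x = -F'(x)` and `⟨F'(x), x⟩ = -ϑ`, so `‖x‖ₓ = √ϑ` and
the first inequality is Cauchy–Schwarz for the form `F''(x)`, applied to `x` and `u`.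

For the second one, let first `u ∈ int K`, and put `p t = ⟨F'(x + t u), u⟩`, so that
`p' t = ‖u‖²_{x + t u}`. Self-concordance in the direction `-u` says that `t ↦ (p' t)^(-1/2)` has
slope at most `1`, hence `p' t ≥ (r + t)⁻²` with `r = 1 / ‖u‖ₓ`. Integrating over `[0, ∞)` gives
`p ∞ - p 0 ≥ 1 / r = ‖u‖ₓ`, and `p ∞ = 0` since `F'` is homogeneous of degree `-1`. The general case
follows by density of `int K` in `K`. -/

open Filter Topology
open scoped Pointwise

section DifferentialInequality

variable {p g g' : ℝ → ℝ}

lemma inv_sqrt_le_inv_sqrt_zero_add (hg : ∀ t, 0 ≤ t → HasDerivAt g (g' t) t)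
    (g_pos : ∀ t, 0 ≤ t → 0 < g t) (hg' : ∀ t, 0 ≤ t → -g' t ≤ 2 * √(g t) * g t)
    {t : ℝ} (ht : 0 ≤ t) : (√(g t))⁻¹ ≤ (√(g 0))⁻¹ + t := by
  have hderiv : ∀ s, 0 ≤ s → HasDerivAt (fun s => s - (√(g s))⁻¹)
      (1 - -(g' s / (2 * √(g s))) / √(g s) ^ 2) s := fun s hs =>
    (hasDerivAt_id s).sub
      (((hg s hs).sqrt (g_pos s hs).ne').inv (Real.sqrt_pos.2 (g_pos s hs)).ne')
  have hmono : MonotoneOn (fun s => s - (√(g s))⁻¹) (Ici 0) := by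
    refine monotoneOn_of_hasDerivWithinAt_nonneg (convex_Ici 0)
      (fun s hs => (hderiv s hs).continuousAt.continuousWithinAt)
      (fun s hs => (hderiv s (interior_subset hs)).hasDerivWithinAt) fun s hs => ?_
    replace hs : 0 ≤ s := interior_subset hs
    have hgs := g_pos s hs
    have hsqrt := Real.sqrt_pos.2 hgs
    have hratio : -1 ≤ g' s / (2 * √(g s) * g s) := by
      rw [le_div_iff₀ (mul_pos (mul_pos two_pos hsqrt) hgs)]
      linarith [hg' s hs]
    rw [Real.sq_sqrt hgs.le, neg_div, sub_neg_eq_add, div_div]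
    linarith
  have hle : 0 - (√(g 0))⁻¹ ≤ t - (√(g t))⁻¹ := hmono self_mem_Ici ht ht
  linarith

lemma inv_sq_le_of_neg_deriv_le (hg : ∀ t, 0 ≤ t → HasDerivAt g (g' t) t)
    (g_pos : ∀ t, 0 ≤ t → 0 < g t) (hg' : ∀ t, 0 ≤ t → -g' t ≤ 2 * √(g t) * g t)
    {t : ℝ} (ht : 0 ≤ t) : (((√(g 0))⁻¹ + t) ^ 2)⁻¹ ≤ g t := by
  have hsqrt := Real.sqrt_pos.2 (g_pos t ht)
  have hr : 0 < (√(g 0))⁻¹ := inv_pos.2 (Real.sqrt_pos.2 (g_pos 0 le_rfl))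
  calc (((√(g 0))⁻¹ + t) ^ 2)⁻¹ = ((√(g 0))⁻¹ + t)⁻¹ ^ 2 := (inv_pow _ 2).symm
    _ ≤ √(g t) ^ 2 := by
        gcongr
        exact inv_le_of_inv_le₀ hsqrt (inv_sqrt_le_inv_sqrt_zero_add hg g_pos hg' ht)
    _ = g t := Real.sq_sqrt (g_pos t ht).le

lemma add_inv_le_add_inv_of_inv_sq_le_deriv {r : ℝ} (hr : 0 < r)
    (hp : ∀ t, 0 ≤ t → HasDerivAt p (g t) t) (hg : ∀ t, 0 ≤ t → ((r + t) ^ 2)⁻¹ ≤ g t)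
    {t : ℝ} (ht : 0 ≤ t) : p 0 + r⁻¹ ≤ p t + (r + t)⁻¹ := by
  have hderiv : ∀ s, 0 ≤ s → HasDerivAt (fun s => p s + (r + s)⁻¹) (g s + -1 / (r + s) ^ 2) s :=
    fun s hs => (hp s hs).add
      (((hasDerivAt_id s).const_add r).inv (add_pos_of_pos_of_nonneg hr hs).ne')
  have hmono : MonotoneOn (fun s => p s + (r + s)⁻¹) (Ici 0) := by
    refine monotoneOn_of_hasDerivWithinAt_nonneg (convex_Ici 0)
      (fun s hs => (hderiv s hs).continuousAt.continuousWithinAt)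
      (fun s hs => (hderiv s (interior_subset hs)).hasDerivWithinAt) fun s hs => ?_
    rw [neg_div, one_div]
    linarith [hg s (interior_subset hs)]
  simpa using hmono self_mem_Ici ht ht

lemma sqrt_deriv_le_sub_of_tendsto {L : ℝ} (hp : ∀ t, 0 ≤ t → HasDerivAt p (g t) t)
    (hg : ∀ t, 0 ≤ t → HasDerivAt g (g' t) t) (g_pos : ∀ t, 0 ≤ t → 0 < g t)
    (hg' : ∀ t, 0 ≤ t → -g' t ≤ 2 * √(g t) * g t) (hL : Tendsto p atTop (𝓝 L)) :
    √(g 0) ≤ L - p 0 := by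
  set r := (√(g 0))⁻¹ with hr
  have r_pos : 0 < r := inv_pos.2 (Real.sqrt_pos.2 (g_pos 0 le_rfl))
  have hlim : Tendsto (fun t => p t + (r + t)⁻¹) atTop (𝓝 (L + 0)) :=
    hL.add (tendsto_inv_atTop_zero.comp (tendsto_atTop_add_const_left _ r tendsto_id))
  have hle : p 0 + r⁻¹ ≤ L + 0 := ge_of_tendsto hlim <| (eventually_ge_atTop 0).mono fun t ht =>
    add_inv_le_add_inv_of_inv_sq_le_deriv r_pos hp
      (fun s hs => inv_sq_le_of_neg_deriv_le hg g_pos hg' hs) ht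
  rw [hr, inv_inv] at hle
  linarith

end DifferentialInequality

section ConvexCone

variable {V : Type*} [AddCommGroup V] [Module ℝ V] [TopologicalSpace V] {K : ConvexCone ℝ V}
  {x u : V}

lemma smul_mem_interior_convexCone [ContinuousConstSMul ℝ V] (hx : x ∈ interior (K : Set V))
    {t : ℝ} (ht : 0 < t) : t • x ∈ interior (K : Set V) := by
  have hsub : t • (K : Set V) ⊆ K := smul_set_subset_iff.2 fun _ hy => K.smul_mem ht hy
  apply interior_mono hsub
  rw [interior_smul₀ ht.ne']
  exact smul_mem_smul_set hx

lemma add_mem_interior_convexCone [ContinuousConstVAdd V V] (hx : x ∈ interior (K : Set V))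
    (hu : u ∈ K) : x + u ∈ interior (K : Set V) := by
  have hsub : (K : Set V) + K ⊆ K := add_subset_iff.2 fun _ hy _ hz => K.add_mem hy hz
  exact interior_mono hsub (subset_interior_add_left (add_mem_add hx hu))

end ConvexCone

lemma inner_le_sqrt_mul_sqrt_of_isPositive {G : Type*} [NormedAddCommGroup G]
    [InnerProductSpace ℝ G] {T : G →L[ℝ] G} (hT : T.IsPositive) (v w : G) :
    ⟪T v, w⟫ ≤ √⟪T v, v⟫ * √⟪T w, w⟫ := by
  have hsymm : ((innerₗ G).comp T.toLinearMap).IsSymm :=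
    ⟨fun a b => (hT.inner_left_eq_inner_right a b).trans (real_inner_comm _ _)⟩
  rw [← Real.sqrt_mul (hT.inner_nonneg_left v)]
  exact Real.le_sqrt_of_sq_le
    (LinearMap.BilinForm.apply_sq_le_of_symm _ hT.inner_nonneg_left hsymm v w)

lemma hasDerivAt_comp_line {V W : Type*} [NormedAddCommGroup V] [NormedSpace ℝ V]
    [NormedAddCommGroup W] [NormedSpace ℝ W] {g : V → W} {g' : V →L[ℝ] W} {x u : V} {t : ℝ}
    (hg : HasFDerivAt g g' (x + t • u)) : HasDerivAt (fun s : ℝ => g (x + s • u)) (g' u) t := by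
  have hline : HasDerivAt (fun s : ℝ => x + s • u) u t := by
    simpa using ((hasDerivAt_id t).smul_const u).const_add x
  exact hg.comp_hasDerivAt t hline

section GradientAndHessian

variable {f : E → ℝ} {x u : E} {t : ℝ}

lemma contDiffAt_gradient {m n : WithTop ℕ∞} (hf : ContDiffAt ℝ n f x) (hmn : m + 1 ≤ n) :
    ContDiffAt ℝ m (gradient f) x :=
  (InnerProductSpace.toDual ℝ E).symm.contDiff.contDiffAt.comp x (hf.fderiv_right hmn)

lemma contDiffAt_hess {m n : WithTop ℕ∞} (hf : ContDiffAt ℝ n f x) (hmn : m + 1 + 1 ≤ n) :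
    ContDiffAt ℝ m (Hess f) x :=
  (contDiffAt_gradient hf hmn).fderiv_right le_rfl

lemma inner_hess_eq_fderiv_fderiv (f : E → ℝ) (x v w : E) :
    ⟪Hess f x v, w⟫ = fderiv ℝ (fderiv ℝ f) x v w := by
  have hgrad : (fun y => gradient f y) = (InnerProductSpace.toDual ℝ E).symm ∘ fderiv ℝ f := rfl
  rw [Hess, hgrad, LinearIsometryEquiv.comp_fderiv]
  exact InnerProductSpace.toDual_symm_apply

lemma isSymmetric_hess (hf : ContDiffAt ℝ 2 f x) : (Hess f x : E →ₗ[ℝ] E).IsSymmetric := by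
  intro v w
  have hsymm : IsSymmSndFDerivAt ℝ f x := hf.isSymmSndFDerivAt (by simp)
  calc ⟪Hess f x v, w⟫ = ⟪Hess f x w, v⟫ := by
        rw [inner_hess_eq_fderiv_fderiv, inner_hess_eq_fderiv_fderiv, hsymm v w]
    _ = ⟪v, Hess f x w⟫ := real_inner_comm _ _

lemma hasDerivAt_inner_gradient_line (hf : DifferentiableAt ℝ (gradient f) (x + t • u)) :
    HasDerivAt (fun s : ℝ => ⟪gradient f (x + s • u), u⟫) ⟪Hess f (x + t • u) u, u⟫ t := by
  have hgrad : HasDerivAt (fun s : ℝ => gradient f (x + s • u)) (Hess f (x + t • u) u) t :=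
    hasDerivAt_comp_line hf.hasFDerivAt
  simpa only [inner_zero_right, zero_add] using hgrad.inner ℝ (hasDerivAt_const t u)

lemma hasDerivAt_inner_hess_line (hf : DifferentiableAt ℝ (Hess f) (x + t • u)) :
    HasDerivAt (fun s : ℝ => ⟪Hess f (x + s • u) u, u⟫) ⟪D3 f (x + t • u) u u, u⟫ t := by
  have hhess : HasDerivAt (fun s : ℝ => Hess f (x + s • u)) (D3 f (x + t • u) u) t :=
    hasDerivAt_comp_line hf.hasFDerivAt
  have happly : HasDerivAt (fun s : ℝ => Hess f (x + s • u) u) (D3 f (x + t • u) u u) t := by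
    simpa only [map_zero, add_zero] using hhess.clm_apply (hasDerivAt_const t u)
  simpa only [inner_zero_right, zero_add] using happly.inner ℝ (hasDerivAt_const t u)

lemma localNorm_neg (f : E → ℝ) (x u : E) : localNorm f x (-u) = localNorm f x u := by
  simp [localNorm]

lemma continuous_localNorm (f : E → ℝ) (x : E) : Continuous (localNorm f x) := by
  unfold localNorm
  fun_prop

end GradientAndHessian

section LogHomogeneous

variable {f : E → ℝ} {x : E}

lemma gradient_smul_of_eventually_eq_sub {t c : ℝ} (ht : t ≠ 0)
    (hf : ∀ᶠ y in 𝓝 x, f (t • y) = f y - c) : gradient f (t • x) = t⁻¹ • gradient f x := by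
  have hfderiv : t • fderiv ℝ f (t • x) = fderiv ℝ f x := by
    rw [← fderiv_comp_smul, EventuallyEq.fderiv_eq hf, fderiv_sub_const]
  rw [eq_inv_smul_iff₀ ht, gradient, gradient, ← map_smul, hfderiv]

lemma hess_apply_self_eq_neg_gradient (hf : DifferentiableAt ℝ (gradient f) x)
    (hhom : ∀ᶠ t : ℝ in 𝓝 1, gradient f (t • x) = t⁻¹ • gradient f x) :
    Hess f x x = -gradient f x := by
  have hray : HasDerivAt (fun t : ℝ => t • x) x 1 := by
    simpa using (hasDerivAt_id (1 : ℝ)).smul_const x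
  have hchain : HasDerivAt (fun t : ℝ => gradient f (t • x)) (Hess f x x) 1 :=
    hf.hasFDerivAt.comp_hasDerivAt_of_eq 1 hray (one_smul ℝ x).symm
  have hinv : HasDerivAt (fun t : ℝ => t⁻¹ • gradient f x) (-gradient f x) 1 := by
    simpa using (hasDerivAt_inv (one_ne_zero (α := ℝ))).smul_const (gradient f x)
  exact hchain.unique (hinv.congr_of_eventuallyEq hhom)

lemma inner_gradient_self_eq_neg {ϑ : ℝ} (hf : DifferentiableAt ℝ f x)
    (hhom : ∀ᶠ t : ℝ in 𝓝 1, f (t • x) = f x - ϑ * Real.log t) : ⟪gradient f x, x⟫ = -ϑ := by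
  have hray : HasDerivAt (fun t : ℝ => t • x) x 1 := by
    simpa using (hasDerivAt_id (1 : ℝ)).smul_const x
  have hchain : HasDerivAt (fun t : ℝ => f (t • x)) (fderiv ℝ f x x) 1 :=
    hf.hasFDerivAt.comp_hasDerivAt_of_eq 1 hray (one_smul ℝ x).symm
  have hlog : HasDerivAt (fun t : ℝ => f x - ϑ * Real.log t) (-ϑ) 1 := by
    simpa using ((Real.hasDerivAt_log (one_ne_zero (α := ℝ))).const_mul ϑ).const_sub (f x)
  rw [inner_gradient_left]
  exact hchain.unique (hlog.congr_of_eventuallyEq hhom)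

end LogHomogeneous

namespace IsLHSCB

section OpenDomain

variable {K : Set E} {ϑ : ℝ} {F : E → ℝ} {x : E}

lemma contDiffAt (hF : IsLHSCB K ϑ F) (hx : x ∈ interior K) : ContDiffAt ℝ 3 F x :=
  hF.contDiff.contDiffAt (isOpen_interior.mem_nhds hx)

lemma differentiableAt_gradient (hF : IsLHSCB K ϑ F) (hx : x ∈ interior K) :
    DifferentiableAt ℝ (gradient F) x :=
  (contDiffAt_gradient (m := 2) (hF.contDiffAt hx) (by norm_num)).differentiableAt (by norm_num)

lemma differentiableAt_hess (hF : IsLHSCB K ϑ F) (hx : x ∈ interior K) :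
    DifferentiableAt ℝ (Hess F) x :=
  (contDiffAt_hess (m := 1) (hF.contDiffAt hx) (by norm_num)).differentiableAt (by norm_num)

lemma isPositive_hess (hF : IsLHSCB K ϑ F) (hx : x ∈ interior K) : (Hess F x).IsPositive := by
  rw [ContinuousLinearMap.isPositive_iff]
  refine ⟨isSymmetric_hess ((hF.contDiffAt hx).of_le (by norm_num)), fun v => ?_⟩
  rcases eq_or_ne v 0 with rfl | hv
  · simp
  · exact (hF.hess_posdef x hx v hv).le

lemma gradient_smul (hF : IsLHSCB K ϑ F) (hx : x ∈ interior K) {t : ℝ} (ht : 0 < t) :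
    gradient F (t • x) = t⁻¹ • gradient F x :=
  gradient_smul_of_eventually_eq_sub ht.ne' <|
    (isOpen_interior.eventually_mem hx).mono fun y hy => hF.log_hom y hy t ht

lemma hess_apply_self (hF : IsLHSCB K ϑ F) (hx : x ∈ interior K) : Hess F x x = -gradient F x :=
  hess_apply_self_eq_neg_gradient (hF.differentiableAt_gradient hx) <|
    (eventually_gt_nhds one_pos).mono fun _ ht => hF.gradient_smul hx ht

lemma inner_gradient_self (hF : IsLHSCB K ϑ F) (hx : x ∈ interior K) : ⟪gradient F x, x⟫ = -ϑ :=
  inner_gradient_self_eq_neg ((hF.contDiffAt hx).differentiableAt (by norm_num)) <|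
    (eventually_gt_nhds one_pos).mono fun t ht => hF.log_hom x hx t ht

lemma localNorm_self (hF : IsLHSCB K ϑ F) (hx : x ∈ interior K) : localNorm F x x = √ϑ := by
  rw [localNorm, hF.hess_apply_self hx, inner_neg_left, hF.inner_gradient_self hx, neg_neg]

lemma inner_neg_gradient_le_sqrt_mul_localNorm (hF : IsLHSCB K ϑ F) (hx : x ∈ interior K)
    (u : E) : ⟪-gradient F x, u⟫ ≤ √ϑ * localNorm F x u := by
  rw [← hF.hess_apply_self hx, ← hF.localNorm_self hx]
  exact inner_le_sqrt_mul_sqrt_of_isPositive (hF.isPositive_hess hx) x u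

lemma neg_inner_D3_self_le (hF : IsLHSCB K ϑ F) (hx : x ∈ interior K) (u : E) :
    -⟪D3 F x u u, u⟫ ≤ 2 * localNorm F x u * ⟪Hess F x u, u⟫ := by
  simpa [D3, localNorm_neg] using hF.self_conc x hx (-u) u

end OpenDomain

section Cone

variable {K : ConvexCone ℝ E} {ϑ : ℝ} {F : E → ℝ} {x u : E}

lemma tendsto_gradient_ray_zero (hF : IsLHSCB (K : Set E) ϑ F) (hx : x ∈ interior (K : Set E))
    (hu : u ∈ interior (K : Set E)) :
    Tendsto (fun t : ℝ => gradient F (x + t • u)) atTop (𝓝 0) := by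
  have hpoint : Tendsto (fun t : ℝ => t⁻¹ • x + u) atTop (𝓝 u) := by
    simpa using ((tendsto_inv_atTop_zero (𝕜 := ℝ)).smul_const x).add_const u
  have hlim : Tendsto (fun t : ℝ => t⁻¹ • gradient F (t⁻¹ • x + u)) atTop (𝓝 0) := by
    simpa using (tendsto_inv_atTop_zero (𝕜 := ℝ)).smul
      ((hF.differentiableAt_gradient hu).continuousAt.tendsto.comp hpoint)
  refine hlim.congr' ?_
  filter_upwards [eventually_gt_atTop 0] with t ht
  have hmem : t⁻¹ • x + u ∈ interior (K : Set E) :=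
    add_mem_interior_convexCone (smul_mem_interior_convexCone hx (inv_pos.2 ht))
      (interior_subset hu)
  rw [← hF.gradient_smul hmem ht, smul_add, smul_inv_smul₀ ht.ne']

lemma localNorm_le_inner_neg_gradient_of_mem_interior (hF : IsLHSCB (K : Set E) ϑ F)
    (hx : x ∈ interior (K : Set E)) (hu : u ∈ interior (K : Set E)) :
    localNorm F x u ≤ ⟪-gradient F x, u⟫ := by
  rcases eq_or_ne u 0 with rfl | hu0
  · simp [localNorm]
  have hmem : ∀ t : ℝ, 0 ≤ t → x + t • u ∈ interior (K : Set E) := by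
    intro t ht
    rcases ht.eq_or_lt with rfl | ht
    · simpa using hx
    · exact add_mem_interior_convexCone hx (K.smul_mem ht (interior_subset hu))
  have hlim : Tendsto (fun t : ℝ => ⟪gradient F (x + t • u), u⟫) atTop (𝓝 0) := by
    simpa using (hF.tendsto_gradient_ray_zero hx hu).inner (𝕜 := ℝ) (tendsto_const_nhds (x := u))
  have hle := sqrt_deriv_le_sub_of_tendsto
    (fun t ht => hasDerivAt_inner_gradient_line (hF.differentiableAt_gradient (hmem t ht)))
    (fun t ht => hasDerivAt_inner_hess_line (hF.differentiableAt_hess (hmem t ht)))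
    (fun t ht => hF.hess_posdef _ (hmem t ht) u hu0)
    (fun t ht => hF.neg_inner_D3_self_le (hmem t ht) u) hlim
  simpa [localNorm] using hle

lemma localNorm_le_inner_neg_gradient (hF : IsLHSCB (K : Set E) ϑ F)
    (hx : x ∈ interior (K : Set E)) (hu : u ∈ closure (K : Set E)) :
    localNorm F x u ≤ ⟪-gradient F x, u⟫ := by
  have hclosed : IsClosed {v : E | localNorm F x v ≤ ⟪-gradient F x, v⟫} :=
    isClosed_le (continuous_localNorm F x) (by fun_prop)
  rw [← K.convex.closure_interior_eq_closure_of_nonempty_interior ⟨x, hx⟩] at hu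
  exact closure_minimal
    (fun v hv => hF.localNorm_le_inner_neg_gradient_of_mem_interior hx hv) hclosed hu

end Cone

end IsLHSCB

/-- A regular cone bundled as a `ConvexCone`, the class of cones in which the barrier estimates are
proved. -/
def IsRegularCone.toConvexCone {K : Set E} (hK : IsRegularCone K) : ConvexCone ℝ E where
  carrier := K
  smul_mem' _ hc x hx := hK.2.2.1 x hx _ hc.le
  add_mem' x hx y hy := by
    have hmid : (1 / 2 : ℝ) • x + (1 / 2 : ℝ) • y ∈ K :=
      hK.2.1 hx hy (by norm_num) (by norm_num) (by norm_num)
    simpa [smul_smul] using hK.2.2.1 _ hmid 2 (by norm_num)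

theorem stmt7_general {K : ConvexCone ℝ E} {ϑ : ℝ} {F : E → ℝ} (hF : IsLHSCB (K : Set E) ϑ F)
    {x : E} (hx : x ∈ interior (K : Set E)) {u : E} (hu : u ∈ closure (K : Set E)) :
    ⟪-gradient F x, u⟫ ≤ √ϑ * localNorm F x u ∧
      √ϑ * localNorm F x u ≤ √ϑ * ⟪-gradient F x, u⟫ :=
  ⟨hF.inner_neg_gradient_le_sqrt_mul_localNorm hx u,
    mul_le_mul_of_nonneg_left (hF.localNorm_le_inner_neg_gradient hx hu) (Real.sqrt_nonneg ϑ)⟩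

/-- For a ϑ-LHSCB `F` on a regular cone `K`, for every `x ∈ int K` and `u ∈ K`:
`⟨−F'(x), u⟩ ≤ √ϑ ‖u‖ₓ ≤ √ϑ ⟨−F'(x), u⟩`. -/
theorem stmt7 {n : ℕ} (K : Set (EuclideanSpace ℝ (Fin n))) (ϑ : ℝ)
    (F : EuclideanSpace ℝ (Fin n) → ℝ)
    (hK : IsRegularCone K) (hF : IsLHSCB K ϑ F)
    (x : EuclideanSpace ℝ (Fin n)) (hx : x ∈ interior K)
    (u : EuclideanSpace ℝ (Fin n)) (hu : u ∈ K) :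
    ⟪-gradient F x, u⟫ ≤ Real.sqrt ϑ * localNorm F x u ∧
    Real.sqrt ϑ * localNorm F x u ≤ Real.sqrt ϑ * ⟪-gradient F x, u⟫ :=
  stmt7_general (K := hK.toConvexCone) hF hx (subset_closure hu)
end
end
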